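/- Let T ≥ 0 and σ_L < 0 be real numbers, and let x, y, z : ℝ → ℝ be differentiable functions whose derivatives are continuous on the interval [0, T]. Suppose that for all t ∈ [0, T], σ_L * Real.sqrt ((deriv x t)^2 + (deriv y t)^2) ≤ deriv z t. Then z 0 − z T ≤ (−σ_L) * ∫ t in 0..T, Real.sqrt ((deriv x t)^2 + (deriv y t)^2 + (deriv z t)^2). -/

import Mathlib

/-!
Since `σ ≤ 0` and a velocity `v` is at least as long as its horizontal part `v.1`, the steepness
bound `σ * ‖v.1‖ ≤ v.2` remains true with `‖v.1‖` replaced by the full speed. Thus `σ` times the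
speed bounds the rate of change of the altitude from below; integrate.
-/

open Set MeasureTheory

theorem mul_sqrt_le_of_mul_norm_le {E : Type*} [SeminormedAddCommGroup E] {σ : ℝ} (hσ : σ ≤ 0)
    {v : E × ℝ} (hv : σ * ‖v.1‖ ≤ v.2) : σ * √(‖v.1‖ ^ 2 + v.2 ^ 2) ≤ v.2 := by
  have hnorm : ‖v.1‖ ≤ √(‖v.1‖ ^ 2 + v.2 ^ 2) :=
    Real.le_sqrt_of_sq_le (le_add_of_nonneg_right (sq_nonneg _))
  exact (mul_le_mul_of_nonpos_left hnorm hσ).trans hv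

/-- Speed is the Euclidean combination of the horizontal and vertical speeds, not the sup norm of
`E × ℝ`. One-sided derivatives allow concatenations of `C¹` paths. -/
theorem stmt_18_general {E : Type*} [NormedAddCommGroup E] [NormedSpace ℝ E] {a b σ : ℝ}
    (hab : a ≤ b) (hσ : σ ≤ 0) {γ γ' : ℝ → E × ℝ} (hγ : ContinuousOn γ (Icc a b))
    (hγ' : ∀ t ∈ Ioo a b, HasDerivWithinAt γ (γ' t) (Ioi t) t)
    (hlength : IntegrableOn (fun t => √(‖(γ' t).1‖ ^ 2 + (γ' t).2 ^ 2)) (Icc a b))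
    (hsteep : ∀ t ∈ Ioo a b, σ * ‖(γ' t).1‖ ≤ (γ' t).2) :
    (γ a).2 - (γ b).2 ≤ -σ * ∫ t in a..b, √(‖(γ' t).1‖ ^ 2 + (γ' t).2 ^ 2) := by
  have hrise : ∫ t in a..b, σ * √(‖(γ' t).1‖ ^ 2 + (γ' t).2 ^ 2) ≤ (γ b).2 - (γ a).2 :=
    intervalIntegral.integral_le_sub_of_hasDeriv_right_of_le hab hγ.snd
      (fun t ht => (hγ' t ht).snd) (hlength.const_mul σ)
      fun t ht => mul_sqrt_le_of_mul_norm_le hσ (hsteep t ht)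
  rw [intervalIntegral.integral_const_mul] at hrise
  linarith

theorem stmt_18 (T σL : ℝ) (hT : 0 ≤ T) (hσ : σL < 0)
    (x y z : ℝ → ℝ)
    (hx : Differentiable ℝ x) (hy : Differentiable ℝ y) (hz : Differentiable ℝ z)
    (hx' : ContinuousOn (deriv x) (Set.Icc 0 T))
    (hy' : ContinuousOn (deriv y) (Set.Icc 0 T))
    (hz' : ContinuousOn (deriv z) (Set.Icc 0 T))
    (hsteep : ∀ t ∈ Set.Icc 0 T,
      σL * Real.sqrt ((deriv x t) ^ 2 + (deriv y t) ^ 2) ≤ deriv z t) :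
    z 0 - z T ≤
      (-σL) * ∫ t in (0 : ℝ)..T,
        Real.sqrt ((deriv x t) ^ 2 + (deriv y t) ^ 2 + (deriv z t) ^ 2) := by
  -- The horizontal plane is identified with `ℂ`.
  have hγ (t : ℝ) : HasDerivAt (fun s => ((x s + y s * Complex.I : ℂ), z s))
      ((deriv x t + deriv y t * Complex.I : ℂ), deriv z t) t :=
    ((hx t).hasDerivAt.ofReal_comp.add ((hy t).hasDerivAt.ofReal_comp.mul_const _)).prodMk
      (hz t).hasDerivAt
  have hnorm_sq (t : ℝ) :
      deriv x t ^ 2 + deriv y t ^ 2 = ‖(deriv x t + deriv y t * Complex.I : ℂ)‖ ^ 2 := by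
    rw [Complex.norm_add_mul_I, Real.sq_sqrt (by positivity)]
  have hspeed : ContinuousOn (fun t => √(deriv x t ^ 2 + deriv y t ^ 2 + deriv z t ^ 2))
      (Icc 0 T) :=
    ((hx'.pow 2).add (hy'.pow 2) |>.add (hz'.pow 2)).sqrt
  simp only [hnorm_sq, Real.sqrt_sq (norm_nonneg _)] at hsteep hspeed ⊢
  exact stmt_18_general (γ' := fun t => (deriv x t + deriv y t * Complex.I, deriv z t)) hT hσ.le
    (HasDerivAt.continuousOn fun t _ => hγ t) (fun t _ => (hγ t).hasDerivWithinAt)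
    hspeed.integrableOn_Icc fun t ht => hsteep t (Ioo_subset_Icc_self ht)
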